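/- arXiv:2512.00178 — 6 statements merged into one kernel-verified Lean document; each statement's English description precedes it below -/
import Mathlib

section
/- Let F be a field and let m ≥ 1 and k ≥ 0 be integers. Then the quotient ring A := F⟦x₁,…,x_m,y₁,…,y_m,Z₁,…,Z_k⟧/(x₁y₁, …, x_my_m) of the formal power series ring over F in 2m + k variables by the ideal generated by the m products xᵢyᵢ is a reduced ring. -/
/-!
The ideal `I = (x₁y₁, …, x_my_m)` is generated by squarefree monomials. A power series lies in
`I` as soon as each monomial in its support is divisible by some `xᵢyᵢ`
(`mem_span_of_coeff_eq_zero`). Let `fⁿ ∈ I`, and let `d` be the exponent of a monomial divisible by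
no `xᵢyᵢ`. Setting all variables not occurring in this monomial to zero (`MvPowerSeries.killCompl`)
is a homomorphism to a power series ring, which is a domain; for every `i` it kills `xᵢ` or `yᵢ`,
so it kills `I`, hence `fⁿ`, hence `f`. It does not alter the coefficient at `d`, which is therefore
zero in `f`. Thus `f ∈ I`, that is, `I` is radical.
-/

/-- A power series all of whose monomials are divisible by one of finitely many monomials lies in
the ideal generated by the latter. -/
theorem mem_span_of_coeff_eq_zero {σ R ι : Type*} [CommRing R] [Fintype ι] (e : ι → σ →₀ ℕ)
    (f : MvPowerSeries σ R)
    (hf : ∀ d, (∀ i, ¬ e i ≤ d) → MvPowerSeries.coeff d f = 0) :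
    f ∈ Ideal.span (Set.range fun i => MvPowerSeries.monomial (e i) (1 : R)) := by
  classical
  -- Assign to each exponent one index `i` for which `e i` divides it, if there is any, and collect
  -- the terms of `f` assigned to `i` into a multiple of the monomial with exponent `e i`.
  let sel : (σ →₀ ℕ) → Option ι := fun d => if h : ∃ i, e i ≤ d then some h.choose else none
  let g : ι → MvPowerSeries σ R := fun i =>
    fun d => if sel (e i + d) = some i then MvPowerSeries.coeff (e i + d) f else 0
  have hg : ∀ i d, MvPowerSeries.coeff d (g i) =
      if sel (e i + d) = some i then MvPowerSeries.coeff (e i + d) f else 0 := fun _ _ => rfl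
  have hfg : f = ∑ i, g i * MvPowerSeries.monomial (e i) (1 : R) := by
    ext d
    simp only [map_sum, MvPowerSeries.coeff_mul_monomial, mul_one, hg]
    by_cases h : ∃ i, e i ≤ d
    · have hsel : sel d = some h.choose := dif_pos h
      rw [Finset.sum_eq_single h.choose]
      · rw [if_pos h.choose_spec, add_tsub_cancel_of_le h.choose_spec, if_pos hsel]
      · intro i _ hi
        split_ifs with h1 h2
        · rw [add_tsub_cancel_of_le h1, hsel] at h2
          exact absurd (Option.some.inj h2).symm hi
        · rfl
        · rfl
      · simp
    · push Not at h
      rw [hf d h]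
      exact (Finset.sum_eq_zero fun i _ => if_neg (h i)).symm
  rw [hfg]
  exact Ideal.sum_mem _ fun i _ => Ideal.mul_mem_left _ _ (Ideal.subset_span ⟨i, rfl⟩)


/-- Let `F` be a field and `m ≥ 1`, `k ≥ 0`. Then the quotient
`A := F⟦x₁,…,x_m,y₁,…,y_m,Z₁,…,Z_k⟧ / (x₁y₁, …, x_my_m)` of the formal power series ring
over `F` in `2m + k` variables by the ideal generated by the `m` products `xᵢyᵢ` is a
reduced ring. -/
theorem stmt_2
    (F : Type) [Field F] (m k : ℕ) (hm : 1 ≤ m) :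
    IsReduced (MvPowerSeries (Fin m ⊕ Fin m ⊕ Fin k) F ⧸
      Ideal.span (Set.range fun i : Fin m =>
        (MvPowerSeries.X (Sum.inl i) : MvPowerSeries (Fin m ⊕ Fin m ⊕ Fin k) F) *
          MvPowerSeries.X (Sum.inr (Sum.inl i)))) := by
  rw [← Ideal.isRadical_iff_quotient_reduced]
  rintro f ⟨n, hn⟩
  have hmon : ∀ i : Fin m,
      (MvPowerSeries.X (Sum.inl i) : MvPowerSeries (Fin m ⊕ Fin m ⊕ Fin k) F) *
        MvPowerSeries.X (Sum.inr (Sum.inl i)) =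
      MvPowerSeries.monomial
        (Finsupp.single (Sum.inl i) 1 + Finsupp.single (Sum.inr (Sum.inl i)) 1) 1 := by
    intro i
    rw [MvPowerSeries.X, MvPowerSeries.X, MvPowerSeries.monomial_mul_monomial, mul_one]
  have hgoal : f ∈ Ideal.span (Set.range fun i : Fin m => MvPowerSeries.monomial
      (Finsupp.single (Sum.inl i) 1 + Finsupp.single (Sum.inr (Sum.inl i)) 1) (1 : F)) := by
    refine mem_span_of_coeff_eq_zero _ f fun d hd => ?_
    let e : {s // s ∈ d.support} ↪ Fin m ⊕ Fin m ⊕ Fin k := Function.Embedding.subtype _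
    have hrange : (d.support : Set _) ⊆ Set.range e := fun s hs => ⟨⟨s, hs⟩, rfl⟩
    have hX : ∀ s, d s = 0 →
        MvPowerSeries.killCompl (R := F) e (MvPowerSeries.X s) = 0 := by
      intro s hs
      apply MvPowerSeries.killCompl_X_eq_zero
      rintro ⟨⟨t, ht⟩, rfl⟩
      exact Finsupp.mem_support_iff.1 ht hs
    have hle : Ideal.span (Set.range fun i : Fin m =>
        (MvPowerSeries.X (Sum.inl i) : MvPowerSeries (Fin m ⊕ Fin m ⊕ Fin k) F) *
          MvPowerSeries.X (Sum.inr (Sum.inl i))) ≤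
        RingHom.ker (MvPowerSeries.killCompl (R := F) e) := by
      rw [Ideal.span_le]
      rintro _ ⟨i, rfl⟩
      rw [SetLike.mem_coe, RingHom.mem_ker, map_mul]
      by_cases h1 : d (Sum.inl i) = 0
      · rw [hX _ h1, zero_mul]
      by_cases h2 : d (Sum.inr (Sum.inl i)) = 0
      · rw [hX _ h2, mul_zero]
      refine absurd (fun s => ?_) (hd i)
      classical
      simp only [Finsupp.add_apply, Finsupp.single_apply]
      grind
    have h0 := hle hn
    rw [RingHom.mem_ker, map_pow] at h0
    have h1 := congrArg (MvPowerSeries.coeff (d.comapDomain e e.injective.injOn))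
      (eq_zero_of_pow_eq_zero h0)
    rwa [MvPowerSeries.coeff_killCompl, Finsupp.embDomain_comapDomain hrange, map_zero] at h1
  simpa only [hmon] using hgoal
end

section
/- Let R be a commutative ring, n ≥ 0, and α₁,…,α_{n+1} ∈ R. Set G := ∏_{i=1}^{n+1}(X − αᵢ) ∈ R[X], and define polynomials q_{−1}, q₀, q₁, … ∈ R[X] by q_{−1} := G′ (the formal derivative of G) and q_{i+1} := cᵢ·G − X·qᵢ, where cᵢ ∈ R is the coefficient of X^n in qᵢ. Let M be the (n+1)×(n+1) matrix over R whose (i,k) entry, for 0 ≤ i,k ≤ n, is the coefficient of X^k in qᵢ. Then there exists a sign ε ∈ {1, −1}, depending only on n, such that det M = ε · (∏_{i=1}^{n+1} αᵢ) · ∏_{1 ≤ i < j ≤ n+1} (αᵢ − α_j)². -/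
/-!
Each `q i` has degree at most `n`, because subtracting `X * q i` from `cᵢ * G` cancels the
coefficient of `X ^ (n + 1)`. At a root `αⱼ` of `G` the recursion reads
`q (i + 1) (αⱼ) = -αⱼ * q i (αⱼ)`, so `q (i + 1) (αⱼ) = (-αⱼ) ^ (i + 1) * G' (αⱼ)`. Hence
multiplying `M` by the transposed Vandermonde matrix `V(α)` gives the transpose of `V(-α)` with
its columns scaled by `-αⱼ * G' (αⱼ)`. As `G' (αⱼ) = ∏_{i ≠ j} (αⱼ - αᵢ)`, taking determinants
gives `det M * det V(α) = ∏ (-αⱼ) * ∏_{i<j} (αᵢ - αⱼ)² * det V(α)` (`det_mul_vandermonde`).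
The factor `det V(α)` cancels in the generic case, where the `αⱼ` are the variables of a
polynomial ring over `ℤ`, and specialization yields the identity with sign `(-1) ^ (n + 1)` over
every commutative ring.
-/

open Polynomial in
/-- The sequence starting at `G'` with `q (i + 1) = c * G - X * q i`, where `c` is the coefficient
of `X ^ n` in `q i`; index `0` here corresponds to the usual index `-1`. -/
noncomputable def qSeq {R : Type} [CommRing R] (n : ℕ) (G : R[X]) : ℕ → R[X]
  | 0 => derivative G
  | i + 1 => C ((qSeq n G i).coeff n) * G - X * qSeq n G i

open Polynomial in
lemma qSeq_map {R S : Type} [CommRing R] [CommRing S] (f : R →+* S) (n : ℕ) (G : R[X]) (i : ℕ) :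
    (qSeq n G i).map f = qSeq n (G.map f) i := by
  induction i with
  | zero => simp [qSeq, derivative_map]
  | succ i ih => simp [qSeq, ← ih]

open Polynomial in
lemma qSeq_natDegree_lt {R : Type} [CommRing R] (n : ℕ) (G : R[X]) (hG : G.Monic)
    (hd : G.natDegree = n + 1) (i : ℕ) : (qSeq n G i).natDegree < n + 1 := by
  rw [Nat.lt_succ_iff, natDegree_le_iff_coeff_eq_zero]
  induction i with
  | zero =>
    intro N hN
    simp [qSeq, coeff_derivative, coeff_eq_zero_of_natDegree_lt (show G.natDegree < N + 1 by omega)]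
  | succ i ih =>
    intro N hN
    obtain ⟨m, rfl⟩ : ∃ m, N = m + 1 := ⟨N - 1, by omega⟩
    rcases (show n = m ∨ n < m by omega) with rfl | h
    · have h1 : G.coeff (n + 1) = 1 := by rw [← hd]; exact hG
      simp [qSeq, coeff_X_mul, h1]
    · simp [qSeq, coeff_X_mul, ih m h,
        coeff_eq_zero_of_natDegree_lt (show G.natDegree < m + 1 by omega)]

open Polynomial in
lemma qSeq_eval {R : Type} [CommRing R] (n : ℕ) (G : R[X]) (a : R) (ha : G.eval a = 0) (i : ℕ) :
    (qSeq n G i).eval a = (-a) ^ i * (derivative G).eval a := by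
  induction i with
  | zero => simp [qSeq]
  | succ i ih => simp only [qSeq, eval_sub, eval_mul, eval_C, eval_X, ha, ih]; ring

open Polynomial in
/-- The determinant identity multiplied by the Vandermonde determinant of the roots. -/
lemma det_mul_vandermonde {R : Type} [CommRing R] [Nontrivial R] (n : ℕ) (α : Fin (n + 1) → R) :
    (Matrix.of fun i k : Fin (n + 1) =>
        (qSeq n (∏ i, (X - C (α i))) (i.1 + 1)).coeff k.1).det * (Matrix.vandermonde α).det =
      ((-1) ^ (n + 1) * (∏ i, α i) * ∏ i, ∏ j ∈ Finset.Ioi i, (α i - α j) ^ 2) *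
        (Matrix.vandermonde α).det := by
  set G : R[X] := ∏ i, (X - C (α i)) with hG
  have hmonic : G.Monic := monic_prod_of_monic _ _ fun i _ => monic_X_sub_C _
  have hdeg : G.natDegree = n + 1 := by
    rw [hG, natDegree_prod_of_monic _ _ fun i _ => monic_X_sub_C _]
    simp
  have hroot (j) : G.eval (α j) = 0 := by
    rw [hG, eval_prod]
    exact Finset.prod_eq_zero (Finset.mem_univ j) (by simp)
  have hder (j) : (derivative G).eval (α j) = ∏ i ∈ {j}ᶜ, (α j - α i) := by
    have := Lagrange.eval_nodal_derivative_eval_node_eq (v := α) (Finset.mem_univ j)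
    rw [Lagrange.nodal, ← hG, Lagrange.eval_nodal] at this
    rw [this]
    congr 1
    ext; simp
  have hmul : (Matrix.of fun i k : Fin (n + 1) => (qSeq n G (i.1 + 1)).coeff k.1) *
      (Matrix.vandermonde α).transpose =
      (Matrix.vandermonde fun j => -α j).transpose *
        Matrix.diagonal fun j => -α j * (derivative G).eval (α j) := by
    ext i j
    rw [Matrix.mul_diagonal, Matrix.mul_apply]
    simp only [Matrix.of_apply, Matrix.transpose_apply, Matrix.vandermonde_apply]
    rw [Fin.sum_univ_eq_sum_range
      (fun k => (qSeq n G (i.1 + 1)).coeff k * α j ^ k) (n + 1),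
      ← eval_eq_sum_range' (qSeq_natDegree_lt n G hmonic hdeg _), qSeq_eval n G _ (hroot j)]
    ring
  have hdet := congrArg Matrix.det hmul
  rw [Matrix.det_mul, Matrix.det_mul, Matrix.det_transpose, Matrix.det_transpose,
    Matrix.det_diagonal] at hdet
  rw [hdet, Matrix.det_vandermonde, Matrix.det_vandermonde, Finset.prod_mul_distrib]
  simp only [hder]
  rw [← Finset.prod_prod_Ioi_mul_eq_prod_prod_off_diag (fun j i => α i - α j)]
  have hneg : ∏ i, -α i = (-1) ^ (n + 1) * ∏ i, α i := by
    simp [Finset.prod_neg]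
  rw [hneg]
  -- Both sides are `(-1) ^ (n + 1) * ∏ αᵢ` times a product over the pairs `i < j`.
  have hpair : (∏ i, ∏ j ∈ Finset.Ioi i, (-α j - -α i)) *
      (∏ i, ∏ j ∈ Finset.Ioi i, ((α i - α j) * (α j - α i))) =
      (∏ i, ∏ j ∈ Finset.Ioi i, (α i - α j) ^ 2) * ∏ i, ∏ j ∈ Finset.Ioi i, (α j - α i) := by
    simp only [← Finset.prod_mul_distrib]
    refine Finset.prod_congr rfl fun i _ => Finset.prod_congr rfl fun j _ => ?_
    ring
  linear_combination ((-1) ^ (n + 1) * ∏ i, α i) * hpair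

/-- Let `R` be a commutative ring, `n ≥ 0`, and `α₁,…,α_{n+1} ∈ R`. Set
`G := ∏ᵢ (X − αᵢ) ∈ R[X]`, and define `q₋₁ := G′` and `q_{i+1} := cᵢ·G − X·qᵢ`, where
`cᵢ` is the coefficient of `X^n` in `qᵢ` (here `q` below is shifted so that `q 0 = G′`
plays the role of `q₋₁` and `q (i+1)` the role of `qᵢ`). Let `M` be the `(n+1)×(n+1)`
matrix whose `(i,k)` entry is the coefficient of `X^k` in `qᵢ`, `0 ≤ i, k ≤ n`. Then
there is a sign `ε ∈ {1,−1}`, depending only on `n`, with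
`det M = ε · (∏ᵢ αᵢ) · ∏_{i<j} (αᵢ − α_j)²`. -/
theorem stmt_8 (n : ℕ) :
    ∃ ε : ℤ, (ε = 1 ∨ ε = -1) ∧
      ∀ (R : Type) [CommRing R] (α : Fin (n + 1) → R) (G : Polynomial R),
        G = ∏ i, (Polynomial.X - Polynomial.C (α i)) →
        ∀ q : ℕ → Polynomial R,
          q 0 = Polynomial.derivative G →
          (∀ i, q (i + 1) = Polynomial.C ((q i).coeff n) * G - Polynomial.X * q i) →
          (Matrix.of fun i k : Fin (n + 1) => (q (i.1 + 1)).coeff k.1).det =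
            (ε : R) * (∏ i, α i) * ∏ i, ∏ j ∈ Finset.Ioi i, (α i - α j) ^ 2 := by
  refine ⟨(-1) ^ (n + 1), neg_one_pow_eq_or ℤ (n + 1), ?_⟩
  intro R _ α G hG q h0 hs
  have hq : q = qSeq n G := by
    funext i
    induction i with
    | zero => rw [h0, qSeq]
    | succ i ih => rw [hs, ih, qSeq]
  subst hq
  -- The generic identity, with the Vandermonde determinant of distinct variables cancelled.
  have hgen := mul_right_cancel₀
    (Matrix.det_vandermonde_ne_zero_iff.mpr (MvPolynomial.X_injective (R := ℤ)))
    (det_mul_vandermonde n (MvPolynomial.X : Fin (n + 1) → MvPolynomial (Fin (n + 1)) ℤ))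
  let f : MvPolynomial (Fin (n + 1)) ℤ →+* R := (MvPolynomial.aeval α).toRingHom
  have hfX (i) : f (MvPolynomial.X i) = α i := MvPolynomial.aeval_X α i
  have hmap := congrArg f hgen
  have hGf : (∏ i, (Polynomial.X - Polynomial.C (MvPolynomial.X i :
      MvPolynomial (Fin (n + 1)) ℤ))).map f = G := by
    simp [hG, Polynomial.map_prod, hfX]
  rw [RingHom.map_det] at hmap
  simp only [map_mul, map_prod, map_pow, map_sub, map_neg, map_one, hfX] at hmap
  rw [Int.cast_pow, Int.cast_neg, Int.cast_one, ← hmap]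
  congr 1
  ext i k
  simp [← hGf, ← qSeq_map]
end

section
/- Let A be a ring, V a left A-module, W ⊆ V a submodule, T ⊆ W a submodule, and θ a simple left A-module. Assume: (a) every simple submodule of V/W is isomorphic to θ; (b) V has no submodule isomorphic to θ; and (c) every extension of θ by T splits, i.e. for every left A-module E and every surjective A-linear map f : E → θ whose kernel is isomorphic to T as an A-module, f admits an A-linear section (equivalently, Ext¹_A(θ, T) = 0). Then every simple submodule of V/T is contained in W/T; in particular, the socle of V/T equals the socle of W/T. -/
/-!
If a simple `S ≤ V/T` is not contained in `W/T = ker (V/T → V/W)`, it embeds in `V/W`, so `S ≃ θ`.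
The preimage of `S` in `V` is then an extension of `θ` by `T`; it splits, and a section embeds `θ`
in `V`, contrary to (b).
-/


/-- Let `A` be a ring, `V` a left `A`-module, `T ≤ W ≤ V` submodules,
and `θ` a simple left `A`-module. Assume: (a) every simple submodule of `V/W` is
isomorphic to `θ`; (b) `V` has no submodule isomorphic to `θ`; (c) every extension of
`θ` by `T` splits (every surjection `E → θ` with kernel isomorphic to `T` admits a
section). Then every simple submodule of `V/T` is contained in `W/T`; in particular the
socle of `V/T` equals the socle of `W/T`. -/
theorem stmt_10
    (A : Type) [Ring A]
    (V : Type) [AddCommGroup V] [Module A V]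
    (θ : Type) [AddCommGroup θ] [Module A θ] [IsSimpleModule A θ]
    (W T : Submodule A V) (hTW : T ≤ W)
    (ha : ∀ S : Submodule A (V ⧸ W), IsSimpleModule A S → Nonempty (S ≃ₗ[A] θ))
    (hb : ∀ S : Submodule A V, ¬ Nonempty (S ≃ₗ[A] θ))
    (hc : ∀ (E : Type) [AddCommGroup E] [Module A E] (f : E →ₗ[A] θ),
      Function.Surjective f → Nonempty ((LinearMap.ker f) ≃ₗ[A] T) →
      ∃ g : θ →ₗ[A] E, f ∘ₗ g = LinearMap.id) :
    (∀ S : Submodule A (V ⧸ T), IsSimpleModule A S → S ≤ Submodule.map T.mkQ W) ∧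
      sSup {S : Submodule A (V ⧸ T) | IsSimpleModule A S} =
        sSup {S : Submodule A (V ⧸ T) |
          IsSimpleModule A S ∧ S ≤ Submodule.map T.mkQ W} := by
  have key : ∀ S : Submodule A (V ⧸ T), IsSimpleModule A S → S ≤ Submodule.map T.mkQ W := by
    intro S hS
    let p : S →ₗ[A] V ⧸ W := Submodule.factor hTW ∘ₗ S.subtype
    rcases LinearMap.injective_or_eq_zero p with hp | hp
    · exfalso
      let e₁ : S ≃ₗ[A] LinearMap.range p := LinearEquiv.ofInjective p hp
      obtain ⟨e₂⟩ := ha (LinearMap.range p) (IsSimpleModule.congr e₁.symm)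
      let e : S ≃ₗ[A] θ := e₁.trans e₂
      let E : Submodule A V := S.comap T.mkQ
      let q : E →ₗ[A] S := T.mkQ.restrict (p := E) (q := S) fun _ hx => hx
      have hTE : T ≤ E := fun t ht => by
        have h0 : T.mkQ t = 0 := by simpa using ht
        simp [E, h0]
      have hq : Function.Surjective q := by
        rintro ⟨y, hy⟩
        obtain ⟨x, rfl⟩ := T.mkQ_surjective y
        exact ⟨⟨x, hy⟩, rfl⟩
      have hker : LinearMap.ker (e.toLinearMap ∘ₗ q) = T.comap E.subtype := by
        ext x
        simp [q, Subtype.ext_iff]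
      obtain ⟨g, hg⟩ := hc E (e.toLinearMap ∘ₗ q) (e.surjective.comp hq)
        ⟨(LinearEquiv.ofEq _ _ hker).trans (Submodule.comapSubtypeEquivOfLe hTE)⟩
      have hg_inj : Function.Injective g :=
        Function.LeftInverse.injective (g := e.toLinearMap ∘ₗ q) fun x => LinearMap.congr_fun hg x
      have hj : Function.Injective (E.subtype ∘ₗ g) := E.injective_subtype.comp hg_inj
      exact hb _ ⟨(LinearEquiv.ofInjective _ hj).symm⟩
    · intro y hy
      obtain ⟨x, rfl⟩ := T.mkQ_surjective y
      have h0 : p ⟨T.mkQ x, hy⟩ = 0 := by rw [hp]; rfl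
      exact ⟨x, (Submodule.Quotient.mk_eq_zero W).1 h0, rfl⟩
  refine ⟨key, congrArg sSup (Set.ext fun S => ?_)⟩
  exact ⟨fun h => ⟨h, key S h⟩, fun h => h.1⟩
end

section
/- Let F be a field, N ≥ 1, and A := F⟦X₁,…,X_N,Y₁,…,Y_N⟧/(X₁Y₁,…,X_NY_N). For J ⊆ {1,…,N} let 𝔭_J ⊆ A be the ideal generated by {X_j : j ∈ J} ∪ {Y_j : j ∉ J}, and for a family 𝒲 of subsets of {1,…,N} set I_𝒲 := ⋂_{J ∈ 𝒲} 𝔭_J (with I_∅ := A). For J₁ ⊆ J₂ ⊆ {1,…,N} let ℱ(J₁,J₂) := {J : J₁ ⊆ J ⊆ J₂} and ℱ(J₁,J₂)^× := ℱ(J₁,J₂) ∖ {J₁}. Then the A-module I_{ℱ(J₁,J₂)^×}/I_{ℱ(J₁,J₂)} is cyclic, generated by the image of ∏_{j ∈ J₂∖J₁} X_j, and it is isomorphic as an A-module to A/𝔭_{J₁}. -/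
/-!
Write `P(S)` for the ideal of the power series ring generated by the variables in a finite set `S`.
A series lies in `P(S)` exactly when it is killed by setting the variables in `S` to zero
(`ker_killVars`), so `P(S)` is prime and contains no variable outside `S`. The preimage of `𝔭 J` in
the power series ring is `P(S)` with `S = {X_j : j ∈ J} ∪ {Y_j : j ∉ J}`, because this ideal
contains every `X_j Y_j`.

Let `m = ∏_{j ∈ J₂ ∖ J₁} X_j`. Every `J ≠ J₁` between `J₁` and `J₂` contains some `j ∈ J₂ ∖ J₁`, so
`m` lies in every `𝔭 J` with `J ∈ ℱ(J₁,J₂)^×`. Consequently `a m ∈ I_ℱ` if and only if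
`a m ∈ 𝔭 J₁`, which by primality means `a ∈ 𝔭 J₁`: the annihilator of the image of `m` is `𝔭 J₁`.

For generation, take `f ∈ I_{ℱ^×}`. For each `j ∈ J₂ ∖ J₁` it lies in
`𝔭 (J₁ ∪ {j}) ⊆ 𝔭 J₁ + (X_j)`, so modulo the prime `𝔭 J₁` it is divisible by each of these `X_j`.
They are pairwise non-associated primes modulo `𝔭 J₁`, hence `f ≡ g m` modulo `𝔭 J₁` for some `g`
(`exists_sub_prod_mul_mem`), and then `f - g m ∈ I_ℱ`.
-/

open MvPowerSeries in
/-- The ring endomorphism of the power series ring that sets the variables in `S` to zero: it keeps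
the coefficients of the monomials not involving `S` and discards the others. -/
noncomputable def killVars {σ : Type*} (F : Type*) [Field F] (S : Finset σ) :
    MvPowerSeries σ F →+* MvPowerSeries σ F := by
  classical
  exact
  { toFun := fun f n => if ∀ s ∈ S, n s = 0 then coeff n f else 0
    map_zero' := by
      ext n
      change (if ∀ s ∈ S, n s = 0 then coeff n (0 : MvPowerSeries σ F) else 0) = coeff n 0
      simp
    map_one' := by
      ext n
      change (if ∀ s ∈ S, n s = 0 then coeff n (1 : MvPowerSeries σ F) else 0) = coeff n 1
      split_ifs with h
      · rfl
      · rw [coeff_one, if_neg]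
        rintro rfl
        exact h fun _ _ => rfl
    map_add' := by
      intro f g
      ext n
      change (if ∀ s ∈ S, n s = 0 then coeff n (f + g) else 0) =
        (if ∀ s ∈ S, n s = 0 then coeff n f else 0) +
          (if ∀ s ∈ S, n s = 0 then coeff n g else 0)
      split_ifs <;> simp
    map_mul' := by
      intro f g
      ext n
      refine Eq.trans ?_ (coeff_mul n _ _).symm
      change (if ∀ s ∈ S, n s = 0 then coeff n (f * g) else 0) =
        ∑ p ∈ Finset.HasAntidiagonal.antidiagonal n,
          (if ∀ s ∈ S, p.1 s = 0 then coeff p.1 f else 0) *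
            (if ∀ s ∈ S, p.2 s = 0 then coeff p.2 g else 0)
      -- A sum of exponents avoids `S` exactly when both summands do.
      have key : ∀ p ∈ Finset.HasAntidiagonal.antidiagonal n,
          ((∀ s ∈ S, n s = 0) ↔ (∀ s ∈ S, p.1 s = 0) ∧ ∀ s ∈ S, p.2 s = 0) := by
        intro p hp
        rw [Finset.HasAntidiagonal.mem_antidiagonal] at hp
        subst hp
        simp only [Finsupp.add_apply, Nat.add_eq_zero_iff]
        exact forall₂_and
      split_ifs with h
      · rw [coeff_mul]
        refine Finset.sum_congr rfl fun p hp => ?_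
        have := (key p hp).1 h
        rw [if_pos this.1, if_pos this.2]
      · refine (Finset.sum_eq_zero fun p hp => ?_).symm
        have := mt (key p hp).2 h
        by_cases h1 : ∀ s ∈ S, p.1 s = 0
        · rw [if_neg (fun h2 => this ⟨h1, h2⟩), mul_zero]
        · rw [if_neg h1, zero_mul] }

open MvPowerSeries in
open Classical in
lemma coeff_killVars {σ F : Type*} [Field F] (S : Finset σ) (f : MvPowerSeries σ F)
    (n : σ →₀ ℕ) :
    coeff n (killVars F S f) = if ∀ s ∈ S, n s = 0 then coeff n f else 0 := by
  change (if _ then _ else _) = _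
  congr

open MvPowerSeries in
lemma mem_ker_killVars {σ F : Type*} [Field F] (S : Finset σ) (f : MvPowerSeries σ F) :
    f ∈ RingHom.ker (killVars F S) ↔ ∀ n : σ →₀ ℕ, (∀ s ∈ S, n s = 0) → coeff n f = 0 := by
  classical
  rw [RingHom.mem_ker, MvPowerSeries.ext_iff]
  refine forall_congr' fun n => ?_
  rw [coeff_killVars]
  simp

open MvPowerSeries in
/-- By induction on `S`: the terms of a series involving one variable `s` form a multiple of `s`,
and the remaining terms are handled by the smaller set. -/
lemma ker_killVars {σ F : Type*} [Field F] (S : Finset σ) :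
    RingHom.ker (killVars F S) =
      Ideal.span ((X : σ → MvPowerSeries σ F) '' (S : Set σ)) := by
  classical
  apply le_antisymm
  · induction S using Finset.induction_on with
    | empty =>
      intro f hf
      rw [mem_ker_killVars] at hf
      have : f = 0 := by
        ext n
        simpa using hf n (by simp)
      rw [this]
      exact zero_mem _
    | insert t S _ ih =>
      intro f hf
      rw [mem_ker_killVars] at hf
      have h1 : killVars F {t} f ∈ RingHom.ker (killVars F S) := by
        rw [mem_ker_killVars]
        intro n hn
        rw [coeff_killVars]
        split_ifs with h
        · exact hf n (by
            intro s hs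
            rcases Finset.mem_insert.1 hs with rfl | hs
            · exact h _ (by simp)
            · exact hn s hs)
        · rfl
      have h2 : (X t : MvPowerSeries σ F) ∣ f - killVars F {t} f := by
        rw [X_dvd_iff]
        intro n hn
        rw [map_sub, coeff_killVars, if_pos (by simpa using hn), sub_self]
      rw [← sub_add_cancel f (killVars F {t} f)]
      refine add_mem (Ideal.mem_of_dvd _ h2 (Ideal.subset_span ⟨t, by simp, rfl⟩)) ?_
      exact Ideal.span_mono (Set.image_mono (by simp)) (ih h1)
  · rw [Ideal.span_le]
    rintro _ ⟨s, hs, rfl⟩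
    rw [SetLike.mem_coe, mem_ker_killVars]
    intro n hn
    rw [coeff_X, if_neg]
    rintro rfl
    simpa using hn s hs

open MvPowerSeries in
lemma isPrime_span_X {σ F : Type*} [Field F] (S : Finset σ) :
    (Ideal.span ((X : σ → MvPowerSeries σ F) '' (S : Set σ))).IsPrime := by
  rw [← ker_killVars]
  have : IsDomain (MvPowerSeries σ F) := NoZeroDivisors.to_isDomain _
  exact RingHom.ker_isPrime _

open MvPowerSeries in
lemma X_mem_span_X {σ F : Type*} [Field F] (S : Finset σ) (t : σ) :
    (X t : MvPowerSeries σ F) ∈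
      Ideal.span ((X : σ → MvPowerSeries σ F) '' (S : Set σ)) ↔ t ∈ S := by
  classical
  refine ⟨fun h => ?_, fun h => Ideal.subset_span ⟨t, h, rfl⟩⟩
  by_contra ht
  rw [← ker_killVars, mem_ker_killVars] at h
  have := h (Finsupp.single t 1) (by
    intro s hs
    rw [Finsupp.single_apply, if_neg]
    rintro rfl
    exact ht hs)
  simp [coeff_X] at this

open MvPowerSeries in
/-- Modulo the prime generated by the variables in `S`, a series divisible by each of several
distinct variables outside `S` is divisible by their product. -/
lemma exists_sub_prod_mul_mem {σ F : Type*} [Field F] [DecidableEq σ] (S T : Finset σ)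
    (hST : Disjoint T S) (f : MvPowerSeries σ F)
    (hf : ∀ t ∈ T, f ∈ Ideal.span
      ((X : σ → MvPowerSeries σ F) '' ((insert t S : Finset σ) : Set σ))) :
    ∃ g, f - (∏ t ∈ T, X t) * g ∈
      Ideal.span ((X : σ → MvPowerSeries σ F) '' (S : Set σ)) := by
  induction T using Finset.induction_on with
  | empty => exact ⟨f, by simp⟩
  | insert t T htT ih =>
    rw [Finset.disjoint_insert_left] at hST
    obtain ⟨g, hg⟩ := ih hST.2 fun u hu => hf u (Finset.mem_insert_of_mem hu)
    have hprime := isPrime_span_X (F := F) (insert t S)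
    have hle : Ideal.span ((X : σ → MvPowerSeries σ F) '' (S : Set σ)) ≤
        Ideal.span ((X : σ → MvPowerSeries σ F) '' ((insert t S : Finset σ) : Set σ)) :=
      Ideal.span_mono (Set.image_mono (by simp))
    have h1 := sub_mem (hf t (Finset.mem_insert_self _ _)) (hle hg)
    rw [sub_sub_cancel] at h1
    have h2 : g ∈ Ideal.span
        ((X : σ → MvPowerSeries σ F) '' ((insert t S : Finset σ) : Set σ)) := by
      refine (hprime.mem_or_mem h1).resolve_left fun h => ?_
      obtain ⟨u, hu, hu'⟩ := hprime.prod_mem_iff.1 h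
      rw [X_mem_span_X, Finset.mem_insert] at hu'
      rcases hu' with rfl | hu'
      · exact htT hu
      · exact Finset.disjoint_left.1 hST.2 hu hu'
    rw [Finset.coe_insert, Set.image_insert_eq, Ideal.mem_span_insert] at h2
    obtain ⟨c, z, hz, rfl⟩ := h2
    refine ⟨c, ?_⟩
    have := add_mem hg (Ideal.mul_mem_left _ (∏ t ∈ T, X t) hz)
    convert this using 1
    rw [Finset.prod_insert htT]
    ring

/-- The variables generating `𝔭 J`: `X_j` (as `Sum.inl j`) for `j ∈ J` and `Y_j` (as `Sum.inr j`)
for `j ∉ J`. -/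
def primeVars {N : ℕ} (J : Finset (Fin N)) : Finset (Fin N ⊕ Fin N) := J.disjSum Jᶜ

open MvPowerSeries in
/-- The preimage of `𝔭 J` in the power series ring is generated by the variables `primeVars J`. -/
lemma mk_mem_iff {F : Type*} [Field F] {N : ℕ} {I : Ideal (MvPowerSeries (Fin N ⊕ Fin N) F)}
    (hI : I = Ideal.span (Set.range fun j : Fin N =>
      (X (Sum.inl j) : MvPowerSeries (Fin N ⊕ Fin N) F) * X (Sum.inr j)))
    (J : Finset (Fin N)) (f : MvPowerSeries (Fin N ⊕ Fin N) F) :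
    Ideal.Quotient.mk I f ∈ Ideal.span
      ((fun j => Ideal.Quotient.mk I (X (Sum.inl j))) '' (J : Set (Fin N)) ∪
        (fun j => Ideal.Quotient.mk I (X (Sum.inr j))) '' (J : Set (Fin N))ᶜ) ↔
    f ∈ Ideal.span ((X : Fin N ⊕ Fin N → MvPowerSeries (Fin N ⊕ Fin N) F) ''
      (primeVars J : Set (Fin N ⊕ Fin N))) := by
  have hset : (fun j => Ideal.Quotient.mk I (X (Sum.inl j))) '' (J : Set (Fin N)) ∪
        (fun j => Ideal.Quotient.mk I (X (Sum.inr j))) '' (J : Set (Fin N))ᶜ =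
      Ideal.Quotient.mk I '' ((X : Fin N ⊕ Fin N → MvPowerSeries (Fin N ⊕ Fin N) F) ''
        (primeVars J : Set (Fin N ⊕ Fin N))) := by
    have h : (primeVars J : Set (Fin N ⊕ Fin N)) =
        Sum.inl '' (J : Set (Fin N)) ∪ Sum.inr '' (J : Set (Fin N))ᶜ := by
      ext v
      simp [primeVars, Finset.mem_disjSum]
    rw [h]
    simp only [Set.image_union, Set.image_image]
  have hle : I ≤ Ideal.span ((X : Fin N ⊕ Fin N → MvPowerSeries (Fin N ⊕ Fin N) F) ''
      (primeVars J : Set (Fin N ⊕ Fin N))) := by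
    rw [hI, Ideal.span_le]
    rintro _ ⟨j, rfl⟩
    by_cases hj : j ∈ J
    · exact Ideal.mul_mem_right _ _ (Ideal.subset_span ⟨_, by simpa [primeVars] using hj, rfl⟩)
    · exact Ideal.mul_mem_left _ _ (Ideal.subset_span ⟨_, by simpa [primeVars] using hj, rfl⟩)
  rw [hset, ← Ideal.map_span, ← Ideal.mem_comap,
    Ideal.comap_map_of_surjective _ Ideal.Quotient.mk_surjective, ← RingHom.ker_eq_comap_bot,
    Ideal.mk_ker, sup_eq_left.2 hle]

/-- Let `F` be a field, `N ≥ 1`, and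
`A := F⟦X₁,…,X_N,Y₁,…,Y_N⟧/(X₁Y₁,…,X_NY_N)`. For `J ⊆ {1,…,N}` let `𝔭_J ⊆ A` be the
ideal generated by `{X_j : j ∈ J} ∪ {Y_j : j ∉ J}`, and for a family `𝒲` of subsets set
`I_𝒲 := ⋂_{J ∈ 𝒲} 𝔭_J`. For `J₁ ⊆ J₂` let `ℱ(J₁,J₂) := {J : J₁ ⊆ J ⊆ J₂}` and
`ℱ(J₁,J₂)^× := ℱ(J₁,J₂) ∖ {J₁}`. Then `I_{ℱ(J₁,J₂)^×}/I_{ℱ(J₁,J₂)}` is a cyclic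
`A`-module, generated by the image of `∏_{j ∈ J₂∖J₁} X_j`, and it is isomorphic as an
`A`-module to `A/𝔭_{J₁}`. -/
theorem stmt_11
    (F : Type) [Field F] (N : ℕ) (hN : 1 ≤ N)
    (I : Ideal (MvPowerSeries (Fin N ⊕ Fin N) F))
    (hI : I = Ideal.span (Set.range fun j : Fin N =>
      (MvPowerSeries.X (Sum.inl j) : MvPowerSeries (Fin N ⊕ Fin N) F) *
        MvPowerSeries.X (Sum.inr j)))
    (𝔭 : Finset (Fin N) → Ideal (MvPowerSeries (Fin N ⊕ Fin N) F ⧸ I))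
    (h𝔭 : ∀ J, 𝔭 J = Ideal.span
      ((fun j => Ideal.Quotient.mk I (MvPowerSeries.X (Sum.inl j))) '' ↑J ∪
        (fun j => Ideal.Quotient.mk I (MvPowerSeries.X (Sum.inr j))) '' (↑J)ᶜ))
    (Iw : Set (Finset (Fin N)) → Ideal (MvPowerSeries (Fin N ⊕ Fin N) F ⧸ I))
    (hIw : ∀ 𝒲, Iw 𝒲 = ⨅ J ∈ 𝒲, 𝔭 J)
    (J₁ J₂ : Finset (Fin N)) (hJ : J₁ ⊆ J₂) :
    Submodule.map (Iw {J | J₁ ⊆ J ∧ J ⊆ J₂}).mkQ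
        (Iw {J | (J₁ ⊆ J ∧ J ⊆ J₂) ∧ J ≠ J₁}) =
      Submodule.span (MvPowerSeries (Fin N ⊕ Fin N) F ⧸ I)
        {(Iw {J | J₁ ⊆ J ∧ J ⊆ J₂}).mkQ
          (Ideal.Quotient.mk I (∏ j ∈ J₂ \ J₁, MvPowerSeries.X (Sum.inl j)))} ∧
    Nonempty
      ((Submodule.map (Iw {J | J₁ ⊆ J ∧ J ⊆ J₂}).mkQ
          (Iw {J | (J₁ ⊆ J ∧ J ⊆ J₂) ∧ J ≠ J₁})) ≃ₗ[MvPowerSeries (Fin N ⊕ Fin N) F ⧸ I]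
        ((MvPowerSeries (Fin N ⊕ Fin N) F ⧸ I) ⧸ 𝔭 J₁)) := by
  have hmem : ∀ J f, Ideal.Quotient.mk I f ∈ 𝔭 J ↔ f ∈ Ideal.span
      ((MvPowerSeries.X : Fin N ⊕ Fin N → MvPowerSeries (Fin N ⊕ Fin N) F) ''
        (primeVars J : Set (Fin N ⊕ Fin N))) := by
    intro J f
    rw [h𝔭]
    exact mk_mem_iff hI J f
  have hIw' : ∀ 𝒲 a, a ∈ Iw 𝒲 ↔ ∀ J ∈ 𝒲, a ∈ 𝔭 J := by
    intro 𝒲 a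
    rw [hIw]
    simp only [Submodule.mem_iInf]
  set m : MvPowerSeries (Fin N ⊕ Fin N) F ⧸ I :=
    Ideal.Quotient.mk I (∏ j ∈ J₂ \ J₁, MvPowerSeries.X (Sum.inl j)) with hm
  have hm_mem : m ∈ Iw {J | (J₁ ⊆ J ∧ J ⊆ J₂) ∧ J ≠ J₁} := by
    rw [hIw']
    rintro J ⟨⟨h1, h2⟩, hne⟩
    obtain ⟨j, hjJ, hj⟩ : ∃ j ∈ J, j ∉ J₁ := by
      by_contra! h
      exact hne (Finset.Subset.antisymm h h1)
    rw [hm, hmem]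
    refine Ideal.mem_of_dvd _ (Finset.dvd_prod_of_mem _ (Finset.mem_sdiff.2 ⟨h2 hjJ, hj⟩))
      (Ideal.subset_span ⟨Sum.inl j, by simpa [primeVars] using hjJ, rfl⟩)
  -- An element of `I_{ℱ^×}` lies in `I_ℱ` as soon as it lies in the one remaining prime `𝔭 J₁`.
  have hfull : ∀ a ∈ Iw {J | (J₁ ⊆ J ∧ J ⊆ J₂) ∧ J ≠ J₁},
      (a ∈ Iw {J | J₁ ⊆ J ∧ J ⊆ J₂} ↔ a ∈ 𝔭 J₁) := by
    intro a ha
    rw [hIw'] at ha ⊢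
    refine ⟨fun h => h J₁ ⟨Finset.Subset.refl _, hJ⟩, fun h J hJJ => ?_⟩
    by_cases hne : J = J₁
    · rwa [hne]
    · exact ha J ⟨hJJ, hne⟩
  have hann : ∀ a, a * m ∈ 𝔭 J₁ ↔ a ∈ 𝔭 J₁ := by
    intro a
    refine ⟨fun h => ?_, fun h => Ideal.mul_mem_right _ _ h⟩
    obtain ⟨f, rfl⟩ := Ideal.Quotient.mk_surjective a
    rw [hm, ← map_mul, hmem] at h
    rw [hmem]
    have hprime := isPrime_span_X (F := F) (primeVars J₁)
    refine (hprime.mem_or_mem h).resolve_right fun h => ?_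
    obtain ⟨u, hu, hu'⟩ := hprime.prod_mem_iff.1 h
    rw [X_mem_span_X] at hu'
    exact (Finset.mem_sdiff.1 hu).2 (by simpa [primeVars] using hu')
  have hgen : ∀ a ∈ Iw {J | (J₁ ⊆ J ∧ J ⊆ J₂) ∧ J ≠ J₁}, ∃ b, a - b * m ∈ 𝔭 J₁ := by
    intro a ha
    rw [hIw'] at ha
    obtain ⟨f, rfl⟩ := Ideal.Quotient.mk_surjective a
    obtain ⟨g, hg⟩ := exists_sub_prod_mul_mem (primeVars J₁)
      ((J₂ \ J₁).map Function.Embedding.inl) (by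
        rw [Finset.disjoint_left]
        rintro v hv hv'
        obtain ⟨j, hj, rfl⟩ := Finset.mem_map.1 hv
        exact (Finset.mem_sdiff.1 hj).2 (by simpa [primeVars] using hv')) f (by
        intro t ht
        obtain ⟨j, hj, rfl⟩ := Finset.mem_map.1 ht
        rw [Finset.mem_sdiff] at hj
        have h := ha (insert j J₁) ⟨⟨Finset.subset_insert _ _,
          Finset.insert_subset hj.1 hJ⟩, fun h => hj.2 (h ▸ Finset.mem_insert_self _ _)⟩
        rw [hmem] at h
        refine Ideal.span_mono (Set.image_mono ?_) h
        intro v hv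
        rcases v with i | i <;> simp [primeVars] at hv ⊢ <;> tauto)
    refine ⟨Ideal.Quotient.mk I g, ?_⟩
    rw [hm, ← map_mul, ← map_sub, hmem, mul_comm]
    simpa [Finset.prod_map] using hg
  have hspan : Submodule.map (Iw {J | J₁ ⊆ J ∧ J ⊆ J₂}).mkQ
        (Iw {J | (J₁ ⊆ J ∧ J ⊆ J₂) ∧ J ≠ J₁}) =
      Submodule.span (MvPowerSeries (Fin N ⊕ Fin N) F ⧸ I)
        {(Iw {J | J₁ ⊆ J ∧ J ⊆ J₂}).mkQ m} := by
    apply le_antisymm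
    · rintro _ ⟨a, ha, rfl⟩
      obtain ⟨b, hb⟩ := hgen a ha
      rw [Submodule.mem_span_singleton]
      refine ⟨b, ?_⟩
      rw [← map_smul, eq_comm, ← sub_eq_zero, ← map_sub, Submodule.mkQ_apply,
        Submodule.Quotient.mk_eq_zero, smul_eq_mul]
      exact (hfull _ (sub_mem ha (Ideal.mul_mem_left _ _ hm_mem))).2 hb
    · rw [Submodule.span_singleton_le_iff_mem]
      exact Submodule.mem_map_of_mem hm_mem
  refine ⟨hspan, ?_⟩
  have hker : 𝔭 J₁ = LinearMap.ker (LinearMap.toSpanSingleton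
      (MvPowerSeries (Fin N ⊕ Fin N) F ⧸ I) _ ((Iw {J | J₁ ⊆ J ∧ J ⊆ J₂}).mkQ m)) := by
    ext a
    rw [LinearMap.mem_ker, LinearMap.toSpanSingleton_apply, ← map_smul, Submodule.mkQ_apply,
      Submodule.Quotient.mk_eq_zero, smul_eq_mul, hfull _ (Ideal.mul_mem_left _ _ hm_mem), hann]
  have hrange := LinearMap.range_toSpanSingleton (R := MvPowerSeries (Fin N ⊕ Fin N) F ⧸ I)
    ((Iw {J | J₁ ⊆ J ∧ J ⊆ J₂}).mkQ m)
  exact ⟨((Submodule.quotEquivOfEq _ _ hker).trans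
    ((LinearMap.quotKerEquivRange _).trans
      (LinearEquiv.ofEq _ _ (hrange.trans hspan.symm)))).symm⟩
end

section
/- Let F be a field, N ≥ 1, and A := F⟦X₁,…,X_N,Y₁,…,Y_N⟧/(X₁Y₁,…,X_NY_N). For J ⊆ {1,…,N} let 𝔭_J ⊆ A be the ideal generated by {X_j : j ∈ J} ∪ {Y_j : j ∉ J}, and for a family 𝒲 of subsets of {1,…,N} set I_𝒲 := ⋂_{J ∈ 𝒲} 𝔭_J. For J₀ ⊆ C ⊆ {1,…,N} write ℱ(J₀,C) := {J : J₀ ⊆ J ⊆ C} (a capped interval with cap C). Then for any J₁, J₂ ⊆ C one has I_{ℱ(J₁,C)} + I_{ℱ(J₂,C)} = I_{ℱ(J₁∪J₂,C)}; note that ℱ(J₁,C) ∩ ℱ(J₂,C) = ℱ(J₁∪J₂,C), so this says that for two capped intervals sharing a common cap, the sum of the associated ideals is the ideal associated to their intersection. -/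
/-!
All ideals involved are images of monomial ideals of the power series ring, so membership can be
read off from supports: a power series lies in the ideal generated by finitely many monomials as
soon as every exponent in its support is divisible by one of them
(`mem_of_support_dvd`), and conversely a series in an ideal generated by variables only has
exponents involving one of these variables (`exists_of_mem_span_X`).

This yields explicit generators (`capped_iInf_eq`): the intersection of the `𝔭_J` over
`J₀ ⊆ J ⊆ C` is generated by the `X_j` with `j ∈ J₀` and the `Y_j` with `j ∉ C`. Indeed, if an
exponent `d` involves none of these variables and is divisible by no `X_j Y_j`, then for
`J = J₀ ∪ {j ∈ C | X_j does not occur in d}` it involves none of the variables generating `𝔭_J`.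
With generators known, the identity of ideals is immediate: the cap contributes the same `Y_j` to
both summands, and the `X_j` are collected over `J₁ ∪ J₂`.
-/

/-- A power series all of whose exponents are divisible by one of finitely many monomials lying in
an ideal `Q` lies in `Q`. -/
theorem mem_of_support_dvd {F σ ι : Type*} [Field F] [Fintype ι]
    (Q : Ideal (MvPowerSeries σ F)) (m : ι → σ →₀ ℕ)
    (hQ : ∀ i, MvPowerSeries.monomial (m i) (1 : F) ∈ Q) (f : MvPowerSeries σ F)
    (hf : ∀ d, MvPowerSeries.coeff d f ≠ 0 → ∃ i, m i ≤ d) : f ∈ Q := by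
  classical
  -- `sel d` selects one generator dividing each exponent; `f` is split according to it.
  have hf' : ∀ d, ∃ o : Option ι, MvPowerSeries.coeff d f ≠ 0 → ∃ i, o = some i ∧ m i ≤ d := by
    intro d
    by_cases h : MvPowerSeries.coeff d f = 0
    · exact ⟨none, fun h' => absurd h h'⟩
    · obtain ⟨i, hi⟩ := hf d h
      exact ⟨some i, fun _ => ⟨i, rfl, hi⟩⟩
  choose sel hsel using hf'
  let g : ι → MvPowerSeries σ F := fun i e =>
    if sel (e + m i) = some i then MvPowerSeries.coeff (e + m i) f else 0
  have hg : ∀ i e, MvPowerSeries.coeff e (g i) =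
    if sel (e + m i) = some i then MvPowerSeries.coeff (e + m i) f else 0 := fun _ _ => rfl
  have key : f = ∑ i, MvPowerSeries.monomial (m i) (1 : F) * g i := by
    ext d
    rw [map_sum]
    simp only [MvPowerSeries.coeff_monomial_mul, hg, one_mul]
    by_cases h : MvPowerSeries.coeff d f = 0
    · rw [h]
      symm
      apply Finset.sum_eq_zero
      intro i _
      split_ifs with h1 h2
      · rw [tsub_add_cancel_of_le h1, h]
      · rfl
      · rfl
    · obtain ⟨i, hi, hle⟩ := hsel d h
      rw [Finset.sum_eq_single i]
      · simp [hle, tsub_add_cancel_of_le hle, hi]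
      · intro j _ hj
        split_ifs with h1 h2
        · rw [tsub_add_cancel_of_le h1, hi] at h2
          exact absurd (Option.some.inj h2).symm hj
        · rfl
        · rfl
      · intro h'
        exact absurd (Finset.mem_univ i) h'
  rw [key]
  exact Ideal.sum_mem _ fun i _ => Q.mul_mem_right _ (hQ i)

theorem exists_of_mem_span_X {F σ : Type*} [Field F] (S : Set σ) (f : MvPowerSeries σ F)
    (hf : f ∈ Ideal.span ((fun s => (MvPowerSeries.X s : MvPowerSeries σ F)) '' S))
    (d : σ →₀ ℕ) (hd : MvPowerSeries.coeff d f ≠ 0) : ∃ s ∈ S, d s ≠ 0 := by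
  classical
  induction hf using Submodule.span_induction generalizing d with
  | mem x hx =>
    obtain ⟨s, hs, rfl⟩ := hx
    refine ⟨s, hs, ?_⟩
    simp only [MvPowerSeries.coeff_X, ne_eq, ite_eq_right_iff, one_ne_zero, imp_false,
      not_not] at hd
    simp [hd]
  | zero => simp at hd
  | add x y _ _ hx hy =>
    by_cases h : MvPowerSeries.coeff d x = 0
    · exact hy d (by simpa [h] using hd)
    · exact hx d h
  | smul a x _ hx =>
    rw [smul_eq_mul, MvPowerSeries.coeff_mul] at hd
    obtain ⟨p, hp, hne⟩ := Finset.exists_ne_zero_of_sum_ne_zero hd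
    obtain ⟨s, hs, h⟩ := hx p.2 (right_ne_zero_of_mul hne)
    refine ⟨s, hs, ?_⟩
    rw [← Finset.HasAntidiagonal.mem_antidiagonal.mp hp, Finsupp.add_apply]
    omega

/-- The intersection of the `𝔭_J` over `J₀ ⊆ J ⊆ C` is generated by the `X_j` with `j ∈ J₀` and
the `Y_j` with `j ∉ C`. -/
theorem capped_iInf_eq {F : Type*} [Field F] {N : ℕ}
    (I : Ideal (MvPowerSeries (Fin N ⊕ Fin N) F))
    (hI : I = Ideal.span (Set.range fun j : Fin N =>
      (MvPowerSeries.X (Sum.inl j) : MvPowerSeries (Fin N ⊕ Fin N) F) *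
        MvPowerSeries.X (Sum.inr j)))
    (𝔭 : Finset (Fin N) → Ideal (MvPowerSeries (Fin N ⊕ Fin N) F ⧸ I))
    (h𝔭 : ∀ J, 𝔭 J = Ideal.span
      ((fun j => Ideal.Quotient.mk I (MvPowerSeries.X (Sum.inl j))) '' ↑J ∪
        (fun j => Ideal.Quotient.mk I (MvPowerSeries.X (Sum.inr j))) '' (↑J)ᶜ))
    (C J₀ : Finset (Fin N)) (hJ₀ : J₀ ⊆ C) :
    ⨅ J ∈ {J | J₀ ⊆ J ∧ J ⊆ C}, 𝔭 J = Ideal.span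
      ((fun j => Ideal.Quotient.mk I (MvPowerSeries.X (Sum.inl j))) '' ↑J₀ ∪
        (fun j => Ideal.Quotient.mk I (MvPowerSeries.X (Sum.inr j))) '' (↑C)ᶜ) := by
  classical
  apply le_antisymm
  · intro a ha
    obtain ⟨f, rfl⟩ := Ideal.Quotient.mk_surjective a
    simp only [Ideal.mem_iInf] at ha
    -- Since `I` lies in the monomial prime upstairs, membership in `𝔭 J` constrains the support
    -- of every representative.
    have hsupp : ∀ J, J₀ ⊆ J → J ⊆ C → ∀ d, MvPowerSeries.coeff d f ≠ 0 →
        ∃ s ∈ (Sum.inl '' (J : Set (Fin N)) ∪ Sum.inr '' (J : Set (Fin N))ᶜ :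
          Set (Fin N ⊕ Fin N)), d s ≠ 0 := by
      intro J h1 h2
      apply exists_of_mem_span_X
      have hmem := ha J ⟨h1, h2⟩
      set P : Ideal (MvPowerSeries (Fin N ⊕ Fin N) F) := Ideal.span
        ((fun s => (MvPowerSeries.X s : MvPowerSeries (Fin N ⊕ Fin N) F)) ''
          (Sum.inl '' (J : Set (Fin N)) ∪ Sum.inr '' (J : Set (Fin N))ᶜ)) with hP
      have hIP : I ≤ P := by
        rw [hI, Ideal.span_le]
        rintro _ ⟨j, rfl⟩
        by_cases hj : j ∈ J
        · exact P.mul_mem_right _ (Ideal.subset_span ⟨_, Or.inl ⟨j, hj, rfl⟩, rfl⟩)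
        · exact P.mul_mem_left _ (Ideal.subset_span ⟨_, Or.inr ⟨j, hj, rfl⟩, rfl⟩)
      have hmap : 𝔭 J = P.map (Ideal.Quotient.mk I) := by
        rw [h𝔭, hP, Ideal.map_span]
        simp only [Set.image_union, Set.image_image]
      rw [hmap, Ideal.mem_map_iff_of_surjective _ Ideal.Quotient.mk_surjective] at hmem
      obtain ⟨g, hg, hgf⟩ := hmem
      have := hIP (Ideal.Quotient.eq.mp hgf)
      simpa using P.sub_mem hg this
    rw [← Ideal.mem_comap]
    refine mem_of_support_dvd (ι := {j // j ∈ J₀} ⊕ {j // j ∉ C} ⊕ Fin N) _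
      (Sum.elim (fun j => Finsupp.single (Sum.inl j.1) 1)
        (Sum.elim (fun j => Finsupp.single (Sum.inr j.1) 1)
          (fun j => Finsupp.single (Sum.inl j) 1 + Finsupp.single (Sum.inr j) 1))) ?_ f ?_
    · rintro (⟨j, hj⟩ | ⟨j, hj⟩ | j)
      · exact Ideal.subset_span (Or.inl ⟨j, hj, rfl⟩)
      · exact Ideal.subset_span (Or.inr ⟨j, hj, rfl⟩)
      · have hz : Ideal.Quotient.mk I
            ((MvPowerSeries.X (Sum.inl j) : MvPowerSeries (Fin N ⊕ Fin N) F) *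
              MvPowerSeries.X (Sum.inr j)) = 0 := by
          rw [Ideal.Quotient.eq_zero_iff_mem, hI]
          exact Ideal.subset_span ⟨j, rfl⟩
        rw [MvPowerSeries.X, MvPowerSeries.X, MvPowerSeries.monomial_mul_monomial,
          one_mul] at hz
        rw [Ideal.mem_comap]
        simp only [Sum.elim_inr]
        rw [hz]
        exact zero_mem _
    · intro d hd
      by_contra! hno
      have hx : ∀ j ∈ J₀, d (Sum.inl j) = 0 := by
        intro j hj
        by_contra h
        apply hno (Sum.inl ⟨j, hj⟩)
        simpa [Finsupp.single_le_iff, Nat.one_le_iff_ne_zero] using h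
      have hy : ∀ j ∉ C, d (Sum.inr j) = 0 := by
        intro j hj
        by_contra h
        apply hno (Sum.inr (Sum.inl ⟨j, hj⟩))
        simpa [Finsupp.single_le_iff, Nat.one_le_iff_ne_zero] using h
      have hxy : ∀ j, d (Sum.inl j) ≠ 0 → d (Sum.inr j) = 0 := by
        intro j hj
        by_contra h
        apply hno (Sum.inr (Sum.inr j))
        intro s
        rcases s with s | s
        · by_cases hs : j = s
          · subst hs; simpa [Nat.one_le_iff_ne_zero] using hj
          · simp [hs]
        · by_cases hs : j = s
          · subst hs; simpa [Nat.one_le_iff_ne_zero] using h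
          · simp [hs]
      obtain ⟨s, hs, hds⟩ := hsupp (J₀ ∪ C.filter fun j => d (Sum.inl j) = 0)
        Finset.subset_union_left
        (Finset.union_subset hJ₀ (Finset.filter_subset _ _)) d hd
      rcases hs with ⟨j, hj, rfl⟩ | ⟨j, hj, rfl⟩
      · rcases Finset.mem_union.mp hj with h | h
        · exact hds (hx j h)
        · exact hds (Finset.mem_filter.mp h).2
      · by_cases hC : j ∈ C
        · refine hds (hxy j fun h => hj ?_)
          exact Finset.mem_union_right _ (Finset.mem_filter.mpr ⟨hC, h⟩)
        · exact hds (hy j hC)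
  · simp only [le_iInf_iff]
    rintro J ⟨h1, h2⟩
    rw [h𝔭]
    apply Ideal.span_mono
    apply Set.union_subset_union
    · exact Set.image_mono (Finset.coe_subset.mpr h1)
    · exact Set.image_mono (Set.compl_subset_compl.mpr (Finset.coe_subset.mpr h2))


/-- Let `F` be a field, `N ≥ 1`, and
`A := F⟦X₁,…,X_N,Y₁,…,Y_N⟧/(X₁Y₁,…,X_NY_N)`. For `J ⊆ {1,…,N}` let `𝔭_J ⊆ A` be the
ideal generated by `{X_j : j ∈ J} ∪ {Y_j : j ∉ J}`, and for a family `𝒲` set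
`I_𝒲 := ⋂_{J ∈ 𝒲} 𝔭_J`. For `J₀ ⊆ C` write `ℱ(J₀,C) := {J : J₀ ⊆ J ⊆ C}` (a capped
interval with cap `C`). Then for any `J₁, J₂ ⊆ C` one has
`I_{ℱ(J₁,C)} + I_{ℱ(J₂,C)} = I_{ℱ(J₁∪J₂,C)}`: for two capped intervals with a common
cap, the sum of the associated ideals is the ideal of their intersection. -/
theorem stmt_12
    (F : Type) [Field F] (N : ℕ) (hN : 1 ≤ N)
    (I : Ideal (MvPowerSeries (Fin N ⊕ Fin N) F))
    (hI : I = Ideal.span (Set.range fun j : Fin N =>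
      (MvPowerSeries.X (Sum.inl j) : MvPowerSeries (Fin N ⊕ Fin N) F) *
        MvPowerSeries.X (Sum.inr j)))
    (𝔭 : Finset (Fin N) → Ideal (MvPowerSeries (Fin N ⊕ Fin N) F ⧸ I))
    (h𝔭 : ∀ J, 𝔭 J = Ideal.span
      ((fun j => Ideal.Quotient.mk I (MvPowerSeries.X (Sum.inl j))) '' ↑J ∪
        (fun j => Ideal.Quotient.mk I (MvPowerSeries.X (Sum.inr j))) '' (↑J)ᶜ))
    (Iw : Set (Finset (Fin N)) → Ideal (MvPowerSeries (Fin N ⊕ Fin N) F ⧸ I))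
    (hIw : ∀ 𝒲, Iw 𝒲 = ⨅ J ∈ 𝒲, 𝔭 J)
    (C J₁ J₂ : Finset (Fin N)) (hJ₁ : J₁ ⊆ C) (hJ₂ : J₂ ⊆ C) :
    Iw {J | J₁ ⊆ J ∧ J ⊆ C} + Iw {J | J₂ ⊆ J ∧ J ⊆ C} =
      Iw {J | J₁ ∪ J₂ ⊆ J ∧ J ⊆ C} := by
  rw [hIw, hIw, hIw, capped_iInf_eq I hI 𝔭 h𝔭 C J₁ hJ₁, capped_iInf_eq I hI 𝔭 h𝔭 C J₂ hJ₂,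
    capped_iInf_eq I hI 𝔭 h𝔭 C (J₁ ∪ J₂) (Finset.union_subset hJ₁ hJ₂),
    Submodule.add_eq_sup, ← Ideal.span_union, Finset.coe_union, Set.image_union]
  congr 1
  rw [Set.union_union_union_comm, Set.union_self]
end

section
/- Let F be a field, O := F⟦v⟧ the formal power series ring, K := F((v)) its field of Laurent series, and let I ≤ GL₂(K) be the Iwahori subgroup consisting of those 2×2 matrices whose entries lie in O, whose determinant is a unit of O, and whose lower-left entry lies in v·O. Let α, β ∈ F^× and a ∈ F with a ≠ 0, and let m, n be nonnegative integers. Then: (a) if m ≤ n, the matrix [[α v^m, 0],[a v^m, β v^n]] lies in the double coset I·w·I, where w := [[0, v^n],[v^m, 0]]; and (b) if m > n, the matrix [[0, β v^n],[α v^m, a v^n]] lies in the double coset I·t·I, where t := [[v^m, 0],[0, v^n]] is the diagonal matrix diag(v^m, v^n). -/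
/-!
Both memberships come from one column operation. Since `a` is a unit, the entry `a v^m`
(resp. `a v^n`) serves as a pivot for clearing the other entry of the lower row; the multiplier
is `(β / a) v^(n - m)`, placed above the diagonal (resp. `(α / a) v^(m - n)`, placed below it),
so it is integral when `m ≤ n` (resp. lies in `v·O` when `n < m`), and the column operation is in
the Iwahori subgroup. The remaining matrix is a constant invertible upper triangular matrix
times `w` (resp. `t`).
-/

/-- Constants are integral. -/
lemma algebraMap_mem_range_ofPowerSeries {F : Type} [Field F] (c : F) :
    algebraMap F (LaurentSeries F) c ∈ (HahnSeries.ofPowerSeries ℤ F).range :=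
  ⟨algebraMap F (PowerSeries F) c, (HahnSeries.algebraMap_apply' ℤ c).symm⟩

/-- Let `F` be a field, `O := F⟦v⟧`, `K := F((v))`, and let `I` be the
Iwahori subgroup of `GL₂(K)`: matrices with entries in `O`, determinant a unit of `O`,
and lower-left entry in `v·O`. Let `α, β ∈ F^×`, `a ∈ F` with `a ≠ 0`, and `m, n ≥ 0`.
Then: (a) if `m ≤ n`, the matrix `[[α v^m, 0],[a v^m, β v^n]]` lies in the double coset
`I·w·I` with `w := [[0, v^n],[v^m, 0]]`; and (b) if `m > n`, the matrix
`[[0, β v^n],[α v^m, a v^n]]` lies in the double coset `I·t·I` with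
`t := diag(v^m, v^n)`. -/
theorem stmt_13
    (F : Type) [Field F]
    (O : Subring (LaurentSeries F))
    (hO : O = (HahnSeries.ofPowerSeries ℤ F).range)
    (v : LaurentSeries F)
    (hv : v = HahnSeries.ofPowerSeries ℤ F PowerSeries.X)
    (Iw : Set (Matrix (Fin 2) (Fin 2) (LaurentSeries F)))
    (hIw : ∀ g, g ∈ Iw ↔
      (∀ i j, g i j ∈ O) ∧
      (∃ u : O, IsUnit u ∧ (u : LaurentSeries F) = g.det) ∧
      (∃ h ∈ O, g 1 0 = v * h))
    (α β a : F) (hα : α ≠ 0) (hβ : β ≠ 0) (ha : a ≠ 0)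
    (m n : ℕ) :
    (m ≤ n →
      ∃ i₁ ∈ Iw, ∃ i₂ ∈ Iw,
        (!![algebraMap F (LaurentSeries F) α * v ^ m, 0;
            algebraMap F (LaurentSeries F) a * v ^ m,
              algebraMap F (LaurentSeries F) β * v ^ n] : Matrix (Fin 2) (Fin 2) _) =
          i₁ * !![0, v ^ n; v ^ m, 0] * i₂) ∧
    (n < m →
      ∃ i₁ ∈ Iw, ∃ i₂ ∈ Iw,
        (!![0, algebraMap F (LaurentSeries F) β * v ^ n;
            algebraMap F (LaurentSeries F) α * v ^ m,
              algebraMap F (LaurentSeries F) a * v ^ n] : Matrix (Fin 2) (Fin 2) _) =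
          i₁ * !![v ^ m, 0; 0, v ^ n] * i₂) := by
  subst hO
  have hc : ∀ c : F, algebraMap F (LaurentSeries F) c ∈ (HahnSeries.ofPowerSeries ℤ F).range :=
    algebraMap_mem_range_ofPowerSeries
  have hvO : ∀ k, v ^ k ∈ (HahnSeries.ofPowerSeries ℤ F).range := fun k =>
    pow_mem (hv ▸ ⟨PowerSeries.X, rfl⟩) k
  have hdet : ∀ c : F, c ≠ 0 →
      ∃ u : (HahnSeries.ofPowerSeries ℤ F).range,
        IsUnit u ∧ (u : LaurentSeries F) = algebraMap F (LaurentSeries F) c := fun c h0 =>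
    ⟨⟨_, hc c⟩, IsUnit.of_mul_eq_one ⟨_, hc c⁻¹⟩
      (Subtype.ext (by simp [h0])), rfl⟩
  have ha' : algebraMap F (LaurentSeries F) a ≠ 0 := by simpa using ha
  have mem_const : ∀ p q s : F, p ≠ 0 → s ≠ 0 →
      !![algebraMap F (LaurentSeries F) p, algebraMap F (LaurentSeries F) q;
        0, algebraMap F (LaurentSeries F) s] ∈ Iw := by
    intro p q s hp hs
    refine (hIw _).2 ⟨?_, ?_, 0, zero_mem _, by simp⟩
    · intro i j
      fin_cases i <;> fin_cases j
      exacts [hc p, hc q, zero_mem _, hc s]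
    · simpa [Matrix.det_fin_two] using hdet (p * s) (mul_ne_zero hp hs)
  have hp : -(α * β / a) ≠ 0 := neg_ne_zero.2 (div_ne_zero (mul_ne_zero hα hβ) ha)
  constructor
  · intro hmn
    obtain ⟨k, rfl⟩ := Nat.exists_eq_add_of_le hmn
    refine ⟨_, mem_const (-(α * β / a)) α a hp ha,
      !![1, algebraMap F (LaurentSeries F) (β / a) * v ^ k; 0, 1], ?_, ?_⟩
    · refine (hIw _).2 ⟨?_, ?_, 0, zero_mem _, by simp⟩
      · intro i j
        fin_cases i <;> fin_cases j
        exacts [one_mem _, mul_mem (hc _) (hvO k), zero_mem _, one_mem _]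
      · exact ⟨1, isUnit_one, by simp [Matrix.det_fin_two]⟩
    · ext1 i j
      fin_cases i <;> fin_cases j <;> simp [Matrix.mul_apply, Fin.sum_univ_two] <;>
        field_simp <;> ring
  · intro hnm
    obtain ⟨k, rfl⟩ := Nat.exists_eq_add_of_lt hnm
    refine ⟨_, mem_const (-(α * β / a)) β a hp ha,
      !![1, 0; algebraMap F (LaurentSeries F) (α / a) * v ^ (k + 1), 1], ?_, ?_⟩
    · refine (hIw _).2 ⟨?_, ?_, algebraMap F (LaurentSeries F) (α / a) * v ^ k,
        mul_mem (hc _) (hvO k), ?_⟩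
      · intro i j
        fin_cases i <;> fin_cases j
        exacts [one_mem _, zero_mem _, mul_mem (hc _) (hvO (k + 1)), one_mem _]
      · exact ⟨1, isUnit_one, by simp [Matrix.det_fin_two]⟩
      · simp [pow_succ]
        ring
    · ext1 i j
      fin_cases i <;> fin_cases j <;> simp [Matrix.mul_apply, Fin.sum_univ_two] <;>
        field_simp <;> ring
end
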